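/- (Barrier for the growth theorem, proof of Theorem 3.2) For every a > 0 there exists a constant c̄₁ > 0, depending only on N, p, q, m and a, such that for every b > 0 and every c₁ ∈ (0, c̄₁] the function Φ(x,t) := c₁ · ( a‖x‖^{p/(p−1)} + b·t^{(p−1−q)/((p−1)(1−q))} )^{(p−1)/(p−1−q)}, defined for x ∈ ℝ^N and t > 0, satisfies at every point (x,t) with 0 < ‖x‖ < 1 and 0 < t < 1: the vector field V(y,s) := ‖∇Φ(y,s)‖^{p−2} ∇Φ(y,s) is differentiable in the space variable at x, ∂_t Φ(x,t) exists with ∂_t Φ(x,t) ≥ 0, and trace(D_x V(x,t)) − ∂_t Φ(x,t) ≤ m · Φ(x,t)^q. In particular Δ_p Φ − ∂_t Φ − λ₀ Φ^q ≤ 0 there for every λ₀ ≥ m. -/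

import Mathlib

noncomputable section

open Set Metric MeasureTheory

/-- Euclidean space `ℝ^N`. -/
abbrev Euc (N : ℕ) := EuclideanSpace ℝ (Fin N)

/-- `s₊^q`: equals `(max s 0)^q` if `s > 0` and `0` otherwise. -/
def plusPowQ (q s : ℝ) : ℝ := if 0 < s then (max s 0) ^ q else 0

/-- The spatial gradient `∇u(x,t)`. -/
def spatialGrad (N : ℕ) (u : Euc N × ℝ → ℝ) (z : Euc N × ℝ) : Euc N :=
  gradient (fun y => u (y, z.2)) z.1

/-- The vector field `V(y,t) = ‖∇u(y,t)‖^(p-2) ∇u(y,t)`. -/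
def pVF (N : ℕ) (p : ℝ) (u : Euc N × ℝ → ℝ) (z : Euc N × ℝ) : Euc N :=
  ‖spatialGrad N u z‖ ^ (p - 2) • spatialGrad N u z

/-- The `p`-Laplacian `Δ_p u` realized as `trace (D_x V)` with `V = ‖∇u‖^(p-2)∇u`. -/
def pLap (N : ℕ) (p : ℝ) (u : Euc N × ℝ → ℝ) (z : Euc N × ℝ) : ℝ :=
  LinearMap.trace ℝ (Euc N) (fderiv ℝ (fun y => pVF N p u (y, z.2)) z.1).toLinearMap

/-- The time derivative `∂ₜ u`. -/
def timeDeriv (N : ℕ) (u : Euc N × ℝ → ℝ) (z : Euc N × ℝ) : ℝ :=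
  deriv (fun t => u (z.1, t)) z.2

/-- `u` is a classical solution of the dead-core equation `Δ_p u - ∂_t u = λ₀ u₊^q` on `D`:
`u` is continuous on `D` and at every point of `D` the spatial gradient and time derivative
exist, `V = ‖∇u‖^(p-2)∇u` is spatially differentiable, and the PDE holds. -/
def IsDCSol (N : ℕ) (p q : ℝ) (lam u : Euc N × ℝ → ℝ) (D : Set (Euc N × ℝ)) : Prop :=
  ContinuousOn u D ∧
  ∀ z ∈ D,
    DifferentiableAt ℝ (fun y => u (y, z.2)) z.1 ∧
    DifferentiableAt ℝ (fun t => u (z.1, t)) z.2 ∧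
    DifferentiableAt ℝ (fun y => pVF N p u (y, z.2)) z.1 ∧
    pLap N p u z - timeDeriv N u z = lam z * plusPowQ q (u z)

/-- The intrinsic scaling exponent `θ = p(1-q)/(p-1-q)`. -/
def thetaV (p q : ℝ) : ℝ := p * (1 - q) / (p - 1 - q)

/-- The intrinsic cylinder `Q_r(x₀,t₀) = B_r(x₀) × (t₀ - r^θ, t₀ + r^θ)`. -/
def cylQ (N : ℕ) (θ r : ℝ) (z0 : Euc N × ℝ) : Set (Euc N × ℝ) :=
  (ball z0.1 r) ×ˢ (Ioo (z0.2 - r ^ θ) (z0.2 + r ^ θ))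

/-- The lower cylinder `Q_r⁻(x₀,t₀) = B_r(x₀) × (t₀ - r^θ, t₀]`. -/
def cylQm (N : ℕ) (θ r : ℝ) (z0 : Euc N × ℝ) : Set (Euc N × ℝ) :=
  (ball z0.1 r) ×ˢ (Ioc (z0.2 - r ^ θ) z0.2)

/-- The upper cylinder `Q_r⁺(x₀,t₀) = B_r(x₀) × [t₀, t₀ + r^θ)`. -/
def cylQp (N : ℕ) (θ r : ℝ) (z0 : Euc N × ℝ) : Set (Euc N × ℝ) :=
  (ball z0.1 r) ×ˢ (Ico z0.2 (z0.2 + r ^ θ))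

/-- The parabolic boundary of `Q_r⁻(x₀,t₀)`:
`(closure(B_r) × {t₀ - r^θ}) ∪ (∂B_r × (t₀ - r^θ, t₀])`. -/
def parBdryQm (N : ℕ) (θ r : ℝ) (z0 : Euc N × ℝ) : Set (Euc N × ℝ) :=
  ((closedBall z0.1 r) ×ˢ ({z0.2 - r ^ θ} : Set ℝ)) ∪
    ((sphere z0.1 r) ×ˢ (Ioc (z0.2 - r ^ θ) z0.2))

/-- The class `𝔍 = 𝔍_p(λ₀,q)(Q₁)`: classical solutions `u` on `Q₁` (for some `λ₀` with
`m ≤ λ₀ ≤ M`) with `0 ≤ u ≤ 1`, `∂ₜ u ≥ 0` on `Q₁` and `u(0,0) = 0`. -/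
def memJ (N : ℕ) (p q m M : ℝ) (u : Euc N × ℝ → ℝ) : Prop :=
  ∃ lam : Euc N × ℝ → ℝ,
    (∀ z ∈ cylQ N (thetaV p q) 1 (0, 0), m ≤ lam z ∧ lam z ≤ M) ∧
    IsDCSol N p q lam u (cylQ N (thetaV p q) 1 (0, 0)) ∧
    (∀ z ∈ cylQ N (thetaV p q) 1 (0, 0), 0 ≤ u z ∧ u z ≤ 1) ∧
    (∀ z ∈ cylQ N (thetaV p q) 1 (0, 0), 0 ≤ timeDeriv N u z) ∧
    u (0, 0) = 0

/-- `S_r[u] = sup over Q_r⁻ of u` (cylinders centered at the origin). -/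
def Sr (N : ℕ) (p q r : ℝ) (u : Euc N × ℝ → ℝ) : ℝ :=
  sSup (u '' cylQm N (thetaV p q) r (0, 0))

/-!
Write `Φ = c w ^ β` with `w = a‖y‖ ^ α + B`, `α = p / (p - 1)`, `β = (p - 1) / (p - 1 - q)`, where
`B = b t ^ γ` does not depend on `y`. These exponents are chosen so that `(α - 2)(p - 1) = -(p - 2)`
and `(β - 1)(p - 1) = β q`: all powers of `‖y‖` cancel in the flux `‖∇Φ‖ ^ (p - 2) ∇Φ`, which is
a constant multiple of `w ^ (β q) • y`. Its divergence is at most a constant times `w ^ (β q)` by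
Euler's identity for the `α`-homogeneous function `a‖y‖ ^ α ≤ w`. Since `Φ ^ q = c ^ q w ^ (β q)`,
this leaves a factor `c ^ (p - 1 - q)`, small for small `c`; and `Φ` increases in `t`.
-/

section NormedSpace

variable {E : Type*} [NormedAddCommGroup E] [NormedSpace ℝ E]

lemma norm_rpow_smul_smul_self {s : ℝ} (hs : 0 < s) (p : ℝ) (y : E) :
    ‖s • y‖ ^ (p - 2) • (s • y) = (s ^ (p - 1) * ‖y‖ ^ (p - 2)) • y := by
  have hpow : s ^ (p - 1) = s ^ (p - 2) * s := by
    rw [← Real.rpow_add_one hs.ne']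
    ring_nf
  rw [norm_smul, Real.norm_of_nonneg hs.le, Real.mul_rpow hs.le (norm_nonneg y), smul_smul, hpow]
  ring_nf

lemma trace_fderiv_smul_self [FiniteDimensional ℝ E] {f : E → ℝ} {y : E}
    (hf : DifferentiableAt ℝ f y) :
    LinearMap.trace ℝ E (fderiv ℝ (fun z => f z • z) y).toLinearMap =
      Module.finrank ℝ E * f y + fderiv ℝ f y y := by
  have hcoe : (fderiv ℝ (fun z => f z • z) y).toLinearMap =
      f y • LinearMap.id + (fderiv ℝ f y).toLinearMap.smulRight y := by
    rw [fderiv_fun_smul hf differentiableAt_fun_id, fderiv_fun_id]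
    rfl
  rw [hcoe, map_add, map_smul, LinearMap.trace_id, LinearMap.trace_smulRight, smul_eq_mul, mul_comm]
  rfl

end NormedSpace

section RadialProfile

variable {E : Type*} [NormedAddCommGroup E]

/-- The radial function `y ↦ a‖y‖ ^ α + B`, a power of which is the spatial part of the barrier. -/
def radialProfile (a α B : ℝ) (y : E) : ℝ := a * ‖y‖ ^ α + B

variable {a α B : ℝ} {y : E}

lemma radialProfile_pos (ha : 0 < a) (hB : 0 ≤ B) (hy : y ≠ 0) : 0 < radialProfile a α B y :=
  add_pos_of_pos_of_nonneg (mul_pos ha (Real.rpow_pos_of_pos (norm_pos_iff.2 hy) α)) hB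

variable [InnerProductSpace ℝ E]

lemma hasFDerivAt_radialProfile_rpow (hα : 1 < α) (hw : radialProfile a α B y ≠ 0) (σ : ℝ) :
    HasFDerivAt (fun z : E => radialProfile a α B z ^ σ)
      ((σ * radialProfile a α B y ^ (σ - 1) * (a * α * ‖y‖ ^ (α - 2))) • innerSL ℝ y) y := by
  refine ((((hasFDerivAt_norm_rpow y hα).const_mul a).add_const B).rpow_const
    (Or.inl hw)).congr_fderiv ?_
  simp only [smul_smul, radialProfile]
  ring_nf

lemma gradient_const_mul_radialProfile_rpow [CompleteSpace E] (hα : 1 < α)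
    (hw : radialProfile a α B y ≠ 0) (c β : ℝ) :
    gradient (fun z : E => c * radialProfile a α B z ^ β) y =
      (c * (β * a * α) * (radialProfile a α B y ^ (β - 1) * ‖y‖ ^ (α - 2))) • y := by
  apply HasGradientAt.gradient
  rw [hasGradientAt_iff_hasFDerivAt, map_smul]
  refine ((hasFDerivAt_radialProfile_rpow hα hw β).const_mul c).congr_fderiv ?_
  rw [smul_smul]
  congr 1
  ring

lemma norm_gradient_rpow_smul_gradient [CompleteSpace E] {p c β : ℝ} (hp : 1 < p) (ha : 0 < a)
    (hB : 0 ≤ B) (hc : 0 < c) (hβ : 0 < β) (hy : y ≠ 0) :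
    ‖gradient (fun z : E => c * radialProfile a (p / (p - 1)) B z ^ β) y‖ ^ (p - 2) •
        gradient (fun z : E => c * radialProfile a (p / (p - 1)) B z ^ β) y =
      ((c * (β * a * (p / (p - 1)))) ^ (p - 1) *
        radialProfile a (p / (p - 1)) B y ^ ((β - 1) * (p - 1))) • y := by
  have hα : 1 < p / (p - 1) := (one_lt_div (sub_pos.2 hp)).2 (sub_one_lt p)
  have hexp : (p / (p - 1) - 2) * (p - 1) = -(p - 2) := by
    field_simp [(sub_pos.2 hp).ne']
    ring
  have hw : 0 < radialProfile a (p / (p - 1)) B y := radialProfile_pos ha hB hy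
  have hn : 0 < ‖y‖ := norm_pos_iff.2 hy
  have hK : 0 < c * (β * a * (p / (p - 1))) :=
    mul_pos hc (mul_pos (mul_pos hβ ha) (one_pos.trans hα))
  have hcancel : (radialProfile a (p / (p - 1)) B y ^ (β - 1) *
      ‖y‖ ^ (p / (p - 1) - 2)) ^ (p - 1) * ‖y‖ ^ (p - 2) =
        radialProfile a (p / (p - 1)) B y ^ ((β - 1) * (p - 1)) := by
    rw [Real.mul_rpow (by positivity) (by positivity), ← Real.rpow_mul hw.le,
      ← Real.rpow_mul hn.le, hexp, mul_assoc, ← Real.rpow_add hn, neg_add_cancel, Real.rpow_zero,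
      mul_one]
  rw [gradient_const_mul_radialProfile_rpow hα hw.ne', norm_rpow_smul_smul_self (by positivity),
    Real.mul_rpow hK.le (by positivity), mul_assoc, hcancel]

lemma fderiv_radialProfile_rpow_self_le (hα : 1 < α) (ha : 0 < a) (hB : 0 ≤ B) (hy : y ≠ 0)
    (σ : ℝ) :
    fderiv ℝ (fun z : E => radialProfile a α B z ^ σ) y y ≤
      max σ 0 * α * radialProfile a α B y ^ σ := by
  have hw : 0 < radialProfile a α B y := radialProfile_pos ha hB hy
  have euler : ‖y‖ ^ (α - 2) * ‖y‖ ^ 2 = ‖y‖ ^ α := by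
    rw [← Real.rpow_natCast, ← Real.rpow_add (norm_pos_iff.2 hy)]
    norm_num
  calc fderiv ℝ (fun z : E => radialProfile a α B z ^ σ) y y
      = σ * α * radialProfile a α B y ^ (σ - 1) * (a * (‖y‖ ^ (α - 2) * ‖y‖ ^ 2)) := by
        rw [(hasFDerivAt_radialProfile_rpow hα hw.ne' σ).fderiv, smul_apply,
          innerSL_apply_apply, real_inner_self_eq_norm_sq, smul_eq_mul]
        ring
    _ = σ * α * radialProfile a α B y ^ (σ - 1) * (a * ‖y‖ ^ α) := by rw [euler]
    _ ≤ max σ 0 * α * radialProfile a α B y ^ (σ - 1) * radialProfile a α B y := by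
        gcongr
        · exact le_max_left σ 0
        · exact le_add_of_nonneg_right hB
    _ = max σ 0 * α * radialProfile a α B y ^ σ := by
        rw [mul_assoc, ← Real.rpow_add_one hw.ne', sub_add_cancel]

lemma trace_fderiv_radialProfile_rpow_smul_self_le [FiniteDimensional ℝ E] {K : ℝ} (hα : 1 < α)
    (ha : 0 < a) (hB : 0 ≤ B) (hK : 0 ≤ K) (hy : y ≠ 0) (σ : ℝ) :
    LinearMap.trace ℝ E
        (fderiv ℝ (fun z : E => (K * radialProfile a α B z ^ σ) • z) y).toLinearMap ≤
      K * ((Module.finrank ℝ E + max σ 0 * α) * radialProfile a α B y ^ σ) := by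
  have hf : DifferentiableAt ℝ (fun z : E => radialProfile a α B z ^ σ) y :=
    (hasFDerivAt_radialProfile_rpow hα (radialProfile_pos ha hB hy).ne' σ).differentiableAt
  rw [trace_fderiv_smul_self (hf.const_mul K), fderiv_const_mul hf,
    smul_apply, smul_eq_mul, mul_left_comm, ← mul_add, add_mul]
  gcongr
  exact fderiv_radialProfile_rpow_self_le hα ha hB hy σ

end RadialProfile

/-- The barrier `Φ(x, t) = c (a‖x‖ ^ (p / (p - 1)) + b t ^ γ) ^ ((p - 1) / (p - 1 - q))` of the
growth theorem, where `γ = (p - 1 - q) / ((p - 1)(1 - q))`. -/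
def growthBarrier (N : ℕ) (p q a b c : ℝ) (z : Euc N × ℝ) : ℝ :=
  c * radialProfile a (p / (p - 1)) (b * z.2 ^ ((p - 1 - q) / ((p - 1) * (1 - q)))) z.1 ^
    ((p - 1) / (p - 1 - q))

/-- A constant `K` with `Δ_p Φ ≤ c ^ (p - 1 - q) K Φ ^ q` for every growth barrier `Φ` of
amplitude `c`. The maximum allows negative `q`. -/
def growthBarrierConst (N : ℕ) (p q a : ℝ) : ℝ :=
  ((p - 1) / (p - 1 - q) * a * (p / (p - 1))) ^ (p - 1) *
    (N + max ((p - 1) / (p - 1 - q) * q) 0 * (p / (p - 1)))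

section GrowthBarrier

variable {N : ℕ} {p q a b c t : ℝ} {x : Euc N}

lemma growthBarrierConst_pos (hN : 1 ≤ N) (hp : 1 < p) (hq : q < p - 1) (ha : 0 < a) :
    0 < growthBarrierConst N p q a := by
  have hβ : 0 < (p - 1) / (p - 1 - q) := div_pos (sub_pos.2 hp) (sub_pos.2 hq)
  have hα : 0 < p / (p - 1) := div_pos (one_pos.trans hp) (sub_pos.2 hp)
  exact mul_pos (Real.rpow_pos_of_pos (mul_pos (mul_pos hβ ha) hα) _)
    (add_pos_of_pos_of_nonneg (Nat.cast_pos.2 hN) (mul_nonneg (le_max_right _ _) hα.le))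

lemma pVF_growthBarrier (hp : 1 < p) (hq : q < p - 1) (ha : 0 < a) (hb : 0 ≤ b) (hc : 0 < c)
    (ht : 0 ≤ t) (hx : x ≠ 0) :
    pVF N p (growthBarrier N p q a b c) (x, t) =
      ((c * ((p - 1) / (p - 1 - q) * a * (p / (p - 1)))) ^ (p - 1) *
        radialProfile a (p / (p - 1)) (b * t ^ ((p - 1 - q) / ((p - 1) * (1 - q)))) x ^
          ((p - 1) / (p - 1 - q) * q)) • x := by
  have hexp : ((p - 1) / (p - 1 - q) - 1) * (p - 1) = (p - 1) / (p - 1 - q) * q := by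
    field_simp [(sub_pos.2 hq).ne']
    ring
  simp only [← hexp, pVF, spatialGrad, growthBarrier]
  exact norm_gradient_rpow_smul_gradient hp ha (mul_nonneg hb (Real.rpow_nonneg ht _)) hc
    (div_pos (sub_pos.2 hp) (sub_pos.2 hq)) hx

lemma pVF_growthBarrier_eventuallyEq (hp : 1 < p) (hq : q < p - 1) (ha : 0 < a) (hb : 0 ≤ b)
    (hc : 0 < c) (ht : 0 ≤ t) (hx : x ≠ 0) :
    (fun y => pVF N p (growthBarrier N p q a b c) (y, t)) =ᶠ[nhds x] fun y =>
      ((c * ((p - 1) / (p - 1 - q) * a * (p / (p - 1)))) ^ (p - 1) *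
        radialProfile a (p / (p - 1)) (b * t ^ ((p - 1 - q) / ((p - 1) * (1 - q)))) y ^
          ((p - 1) / (p - 1 - q) * q)) • y :=
  (eventually_ne_nhds hx).mono fun _ hy => pVF_growthBarrier hp hq ha hb hc ht hy

lemma differentiableAt_pVF_growthBarrier (hp : 1 < p) (hq : q < p - 1) (ha : 0 < a) (hb : 0 ≤ b)
    (hc : 0 < c) (ht : 0 ≤ t) (hx : x ≠ 0) :
    DifferentiableAt ℝ (fun y => pVF N p (growthBarrier N p q a b c) (y, t)) x := by
  have hw := radialProfile_pos (α := p / (p - 1)) ha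
    (mul_nonneg hb (Real.rpow_nonneg ht ((p - 1 - q) / ((p - 1) * (1 - q))))) hx
  have hα : 1 < p / (p - 1) := (one_lt_div (sub_pos.2 hp)).2 (sub_one_lt p)
  refine DifferentiableAt.congr_of_eventuallyEq ?_
    (pVF_growthBarrier_eventuallyEq hp hq ha hb hc ht hx)
  exact ((hasFDerivAt_radialProfile_rpow hα hw.ne' _).differentiableAt.const_mul _).smul
    differentiableAt_fun_id

lemma pLap_growthBarrier_le (hp : 1 < p) (hq : q < p - 1) (ha : 0 < a) (hb : 0 ≤ b) (hc : 0 < c)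
    (ht : 0 ≤ t) (hx : x ≠ 0) :
    pLap N p (growthBarrier N p q a b c) (x, t) ≤
      c ^ (p - 1 - q) * growthBarrierConst N p q a * growthBarrier N p q a b c (x, t) ^ q := by
  have hB := mul_nonneg hb (Real.rpow_nonneg ht ((p - 1 - q) / ((p - 1) * (1 - q))))
  have hα : 1 < p / (p - 1) := (one_lt_div (sub_pos.2 hp)).2 (sub_one_lt p)
  have hβ : 0 < (p - 1) / (p - 1 - q) := div_pos (sub_pos.2 hp) (sub_pos.2 hq)
  have hA := mul_pos (mul_pos hβ ha) (one_pos.trans hα)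
  have hw := radialProfile_pos (α := p / (p - 1)) ha hB hx
  have hcq : c ^ (p - 1) = c ^ (p - 1 - q) * c ^ q := by
    rw [← Real.rpow_add hc, sub_add_cancel]
  rw [pLap, (pVF_growthBarrier_eventuallyEq hp hq ha hb hc ht hx).fderiv_eq]
  refine (trace_fderiv_radialProfile_rpow_smul_self_le hα ha hB
    (Real.rpow_nonneg (mul_pos hc hA).le _) hx _).trans_eq ?_
  rw [finrank_euclideanSpace_fin, growthBarrierConst, growthBarrier, Real.mul_rpow hc.le hA.le,
    Real.mul_rpow hc.le (Real.rpow_nonneg hw.le _), ← Real.rpow_mul hw.le, hcq]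
  ring

lemma hasDerivAt_growthBarrier (ha : 0 < a) (hb : 0 ≤ b) (ht : 0 < t) (hx : x ≠ 0) :
    HasDerivAt (fun s => growthBarrier N p q a b c (x, s))
      (c * (b * ((p - 1 - q) / ((p - 1) * (1 - q)) *
          t ^ ((p - 1 - q) / ((p - 1) * (1 - q)) - 1)) * ((p - 1) / (p - 1 - q)) *
        radialProfile a (p / (p - 1)) (b * t ^ ((p - 1 - q) / ((p - 1) * (1 - q)))) x ^
          ((p - 1) / (p - 1 - q) - 1))) t := by
  have hw := radialProfile_pos (α := p / (p - 1)) ha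
    (mul_nonneg hb (Real.rpow_nonneg ht.le ((p - 1 - q) / ((p - 1) * (1 - q))))) hx
  exact (((((Real.hasDerivAt_rpow_const (Or.inl ht.ne')).const_mul b).const_add _).rpow_const
    (Or.inl hw.ne')).const_mul c)

lemma timeDeriv_growthBarrier_nonneg (hp : 1 < p) (hq : q < p - 1) (hq1 : q < 1) (ha : 0 < a)
    (hb : 0 ≤ b) (hc : 0 ≤ c) (ht : 0 < t) (hx : x ≠ 0) :
    0 ≤ timeDeriv N (growthBarrier N p q a b c) (x, t) := by
  have hβ : 0 < (p - 1) / (p - 1 - q) := div_pos (sub_pos.2 hp) (sub_pos.2 hq)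
  have hγ : 0 < (p - 1 - q) / ((p - 1) * (1 - q)) :=
    div_pos (sub_pos.2 hq) (mul_pos (sub_pos.2 hp) (sub_pos.2 hq1))
  have hw := radialProfile_pos (α := p / (p - 1)) ha
    (mul_nonneg hb (Real.rpow_nonneg ht.le ((p - 1 - q) / ((p - 1) * (1 - q))))) hx
  rw [timeDeriv, (hasDerivAt_growthBarrier ha hb ht hx).deriv]
  positivity [hβ, hγ]

end GrowthBarrier

theorem barrier_growth_general {N : ℕ} (hN : 1 ≤ N) {p q m a : ℝ} (hp : 1 < p) (hq : q < p - 1)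
    (hq1 : q < 1) (hm : 0 < m) (ha : 0 < a) :
    ∃ cbar : ℝ, 0 < cbar ∧ ∀ b : ℝ, 0 ≤ b → ∀ c : ℝ, 0 < c → c ≤ cbar →
      ∀ (x : Euc N) (t : ℝ), x ≠ 0 → 0 < t →
        DifferentiableAt ℝ (fun y => pVF N p (growthBarrier N p q a b c) (y, t)) x ∧
        DifferentiableAt ℝ (fun s => growthBarrier N p q a b c (x, s)) t ∧
        0 ≤ timeDeriv N (growthBarrier N p q a b c) (x, t) ∧
        pLap N p (growthBarrier N p q a b c) (x, t) -
            timeDeriv N (growthBarrier N p q a b c) (x, t) ≤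
          m * growthBarrier N p q a b c (x, t) ^ q := by
  have hK := growthBarrierConst_pos hN hp hq ha
  refine ⟨(m / growthBarrierConst N p q a) ^ (p - 1 - q)⁻¹,
    Real.rpow_pos_of_pos (div_pos hm hK) _, fun b hb c hc hle x t hx ht => ?_⟩
  have htime := timeDeriv_growthBarrier_nonneg hp hq hq1 ha hb hc.le ht hx
  refine ⟨differentiableAt_pVF_growthBarrier hp hq ha hb hc ht.le hx,
    (hasDerivAt_growthBarrier ha hb ht hx).differentiableAt, htime, ?_⟩
  have hsmall : c ^ (p - 1 - q) * growthBarrierConst N p q a ≤ m := by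
    rwa [Real.le_rpow_inv_iff_of_pos hc.le (div_pos hm hK).le (sub_pos.2 hq), le_div_iff₀ hK]
      at hle
  have hΦ : 0 ≤ growthBarrier N p q a b c (x, t) :=
    mul_nonneg hc.le (Real.rpow_nonneg (radialProfile_pos ha
      (mul_nonneg hb (Real.rpow_nonneg ht.le _)) hx).le _)
  exact (sub_le_self _ htime).trans ((pLap_growthBarrier_le hp hq ha hb hc ht.le hx).trans
    (mul_le_mul_of_nonneg_right hsmall (Real.rpow_nonneg hΦ q)))

/-- **Barrier for the growth theorem (proof of Theorem 3.2).** -/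
theorem barrier_growth
    (N : ℕ) (hN : 1 ≤ N) (p q m : ℝ)
    (hp : 2 ≤ p) (hq0 : 0 ≤ q) (hq1 : q < 1) (hm : 0 < m)
    (a : ℝ) (ha : 0 < a) :
    ∃ cbar₁ : ℝ, 0 < cbar₁ ∧
      ∀ b : ℝ, 0 < b →
      ∀ c₁ : ℝ, 0 < c₁ → c₁ ≤ cbar₁ →
      ∀ Phi : Euc N × ℝ → ℝ,
        (∀ z : Euc N × ℝ, Phi z =
          c₁ * (a * ‖z.1‖ ^ (p / (p - 1)) +
            b * z.2 ^ ((p - 1 - q) / ((p - 1) * (1 - q)))) ^ ((p - 1) / (p - 1 - q))) →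
        ∀ (x : Euc N) (t : ℝ), 0 < ‖x‖ → ‖x‖ < 1 → 0 < t → t < 1 →
          DifferentiableAt ℝ (fun y => pVF N p Phi (y, t)) x ∧
          DifferentiableAt ℝ (fun s => Phi (x, s)) t ∧
          0 ≤ timeDeriv N Phi (x, t) ∧
          pLap N p Phi (x, t) - timeDeriv N Phi (x, t) ≤ m * Phi (x, t) ^ q := by
  obtain ⟨cbar₁, hpos, h⟩ :=
    barrier_growth_general hN (by linarith : 1 < p) (by linarith) hq1 hm ha
  refine ⟨cbar₁, hpos, fun b hb c₁ hc₁ hle Phi hPhi x t hx _ ht _ => ?_⟩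
  obtain rfl : Phi = growthBarrier N p q a b c₁ := funext hPhi
  exact h b hb.le c₁ hc₁ hle x t (norm_pos_iff.1 hx) ht
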